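/- Let ρ be a binary constant-length substitution of length L ≥ 2 with Fourier matrix B(k), and suppose the polynomials Q and R are not equal. Then for Lebesgue-almost every k ∈ ℝ, lim_{n→∞} (1/n)·Σ_{m=0}^{n−1} log|det B(L^m k)| = m(Q−R), the logarithmic Mahler measure of Q−R. -/

import Mathlib

open Filter Polynomial

noncomputable section

/-- `e k = exp(2πik)`, the point on the unit circle with angle `2πk`. -/
def e (k : ℝ) : ℂ := Complex.exp (2 * Real.pi * Complex.I * k)

/-- Coincidence positions of type `a` (letter `a` encoded as `0`, `b` as `1`). -/
def Ca {L : ℕ} (wa wb : Fin L → Fin 2) : Finset (Fin L) :=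
  Finset.univ.filter fun i => wa i = 0 ∧ wb i = 0

/-- Coincidence positions of type `b`. -/
def Cb {L : ℕ} (wa wb : Fin L → Fin 2) : Finset (Fin L) :=
  Finset.univ.filter fun i => wa i = 1 ∧ wb i = 1

/-- Bijective positions where `(w_a)_i = a` and `(w_b)_i = b`. -/
def Pa {L : ℕ} (wa wb : Fin L → Fin 2) : Finset (Fin L) :=
  Finset.univ.filter fun i => wa i = 0 ∧ wb i = 1

/-- Bijective positions where `(w_a)_i = b` and `(w_b)_i = a`. -/
def Pb {L : ℕ} (wa wb : Fin L → Fin 2) : Finset (Fin L) :=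
  Finset.univ.filter fun i => wa i = 1 ∧ wb i = 0

/-- The polynomial `∑_{z ∈ S} X^z` associated with a set of positions. -/
def posPoly {L : ℕ} (S : Finset (Fin L)) : Polynomial ℂ :=
  ∑ z ∈ S, Polynomial.X ^ (z : ℕ)

/-- The Fourier matrix `B(k)` of the substitution determined by `wa, wb`. -/
def FourierB {L : ℕ} (wa wb : Fin L → Fin 2) (k : ℝ) : Matrix (Fin 2) (Fin 2) ℂ :=
  !![(posPoly (Ca wa wb) + posPoly (Pa wa wb)).eval (e k),
     (posPoly (Ca wa wb) + posPoly (Pb wa wb)).eval (e k);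
     (posPoly (Cb wa wb) + posPoly (Pb wa wb)).eval (e k),
     (posPoly (Cb wa wb) + posPoly (Pa wa wb)).eval (e k)]

/-- The logarithmic Mahler measure `m(f) = ∫₀¹ log |f(e^{2πik})| dk`. -/
def logMahler (f : Polynomial ℂ) : ℝ :=
  ∫ k in (0:ℝ)..1, Real.log ‖f.eval (e k)‖

/-- The operator norm of a matrix, induced by the Euclidean norm on `ℂ²`. -/
def opNorm (M : Matrix (Fin 2) (Fin 2) ℂ) : ℝ :=
  ‖Matrix.toEuclideanCLM (𝕜 := ℂ) M‖

/-- The (forward) matrix product `B(k) · B(Lk) ⋯ B(L^{n-1}k)` of the outward cocycle. -/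
def cocycleProd {L : ℕ} (wa wb : Fin L → Fin 2) (k : ℝ) (n : ℕ) :
    Matrix (Fin 2) (Fin 2) ℂ :=
  (((List.range n).map fun m => FourierB wa wb ((L : ℝ) ^ m * k))).prod

/-!
Since the four position sets partition `{0, …, L - 1}`, the determinant factors as
`det B(k) = (Q - R)(u) * (1 + u + ⋯ + u ^ (L - 1))` with `u = exp(2πik)`. Multiplication by `L` is
ergodic on `ℝ / ℤ` and `log |f|` is integrable on the unit circle for every polynomial `f`, so by
Birkhoff's theorem the averages converge almost everywhere to the logarithmic Mahler measure of
this product. It equals that of `Q - R`, because `1 + X + ⋯ + X ^ (L - 1)` is a product of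
cyclotomic polynomials, which have Mahler measure `1`.

Birkhoff's theorem for an ergodic map `T` follows from Garsia's argument: if `M n` is the maximum of
the first Birkhoff sums of `f`, then `M (n + 1) - M n ∘ T = max f (-M n ∘ T)` has nonnegative
integral, and it tends to `f` where the Birkhoff sums are unbounded above. Hence `∫ f < 0` forces
them to be bounded above almost everywhere, and one applies this to `f - b` for each `b` exceeding
the mean of `f`, and likewise to `-f`.
-/

open MeasureTheory Set Topology

section BirkhoffErgodicTheorem

section MaximalFunction

variable {α R : Type*} [AddCommGroup R] [LinearOrder R] (T : α → α) (f : α → R)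

/-- The maximal function `max (S₀ f, …, Sₙ f)` of the maximal ergodic theorem, where `Sₖ f` is the
`k`-th Birkhoff sum. The empty sum `S₀ f = 0` is included, which makes the function nonnegative. -/
def birkhoffMax : ℕ →o (α → R) :=
  partialSups (birkhoffSum T f)

lemma birkhoffMax_apply (n : ℕ) (x : α) :
    birkhoffMax T f n x = partialSups (fun k => birkhoffSum T f k x) n :=
  Pi.partialSups_apply ..

lemma birkhoffMax_nonneg (n : ℕ) (x : α) : 0 ≤ birkhoffMax T f n x := by
  rw [birkhoffMax_apply]
  simpa using le_partialSups_of_le (birkhoffSum T f · x) n.zero_le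

variable {T f} in
lemma tendsto_birkhoffMax_atTop {x : α} (h : ¬BddAbove (range fun n => birkhoffSum T f n x)) :
    Tendsto (fun n => birkhoffMax T f n x) atTop atTop := by
  simp only [birkhoffMax_apply]
  exact tendsto_atTop_atTop_of_monotone' (partialSups_monotone _)
    (mt bddAbove_range_partialSups.1 h)

variable [IsOrderedAddMonoid R]

lemma bddAbove_birkhoffSum_apply_iff (x : α) :
    BddAbove (range fun n => birkhoffSum T f n (T x)) ↔
      BddAbove (range fun n => birkhoffSum T f n x) := by
  constructor
  · rintro ⟨C, hC⟩
    refine ⟨max 0 (f x + C), forall_mem_range.2 fun n => ?_⟩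
    cases n with
    | zero => simp
    | succ n =>
      rw [birkhoffSum_succ']
      exact le_max_of_le_right (by grw [hC (mem_range_self n)])
  · rintro ⟨C, hC⟩
    refine ⟨C - f x, forall_mem_range.2 fun n => ?_⟩
    rw [le_sub_iff_add_le', ← birkhoffSum_succ']
    exact hC (mem_range_self (n + 1))

lemma birkhoffMax_succ (n : ℕ) (x : α) :
    birkhoffMax T f (n + 1) x = max 0 (f x + birkhoffMax T f n (T x)) := by
  simp only [birkhoffMax_apply, partialSups_add_one', Function.comp_def, birkhoffSum_succ',
    Nat.bot_eq_zero, birkhoffSum_zero]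
  exact congrArg (max 0) (map_partialSups (OrderIso.addLeft (f x)) (birkhoffSum T f · (T x)) n)

lemma birkhoffMax_succ_sub_birkhoffMax_apply (n : ℕ) (x : α) :
    birkhoffMax T f (n + 1) x - birkhoffMax T f n (T x) =
      max (f x) (-birkhoffMax T f n (T x)) := by
  rw [birkhoffMax_succ, max_comm, ← max_sub_sub_right, add_sub_cancel_right, zero_sub]

end MaximalFunction

variable {α : Type*} {T : α → α} {f : α → ℝ}

lemma eventually_birkhoffAverage_lt_of_bddAbove {x : α} {a b : ℝ} (hba : b < a)
    (h : BddAbove (range fun n => birkhoffSum T (fun y => f y - b) n x)) :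
    ∀ᶠ n in atTop, birkhoffAverage ℝ T f n x < a := by
  obtain ⟨C, hC⟩ := h
  have hgap : Tendsto (fun n : ℕ => (n : ℝ) * (a - b)) atTop atTop :=
    tendsto_natCast_atTop_atTop.atTop_mul_const (sub_pos.2 hba)
  filter_upwards [hgap.eventually_gt_atTop C, eventually_gt_atTop 0] with n hn hpos
  have hsum : birkhoffSum T f n x - n * b ≤ C := by
    simpa [birkhoffSum] using hC (mem_range_self n)
  rw [birkhoffAverage, smul_eq_mul, inv_mul_lt_iff₀ (by positivity)]
  linarith

variable [MeasurableSpace α] {μ : Measure α}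

lemma integrable_birkhoffSum {E : Type*} [NormedAddCommGroup E] {g : α → E}
    (hT : MeasurePreserving T μ μ) (hg : Integrable g μ) (n : ℕ) :
    Integrable (birkhoffSum T g n) μ :=
  integrable_finsetSum _ fun k _ => (hT.iterate k).integrable_comp_of_integrable hg

lemma integrable_birkhoffMax (hT : MeasurePreserving T μ μ) (hf : Integrable f μ) (n : ℕ) :
    Integrable (birkhoffMax T f n) μ := by
  induction n with
  | zero => simp [birkhoffMax]
  | succ n ih =>
    rw [birkhoffMax, partialSups_add_one]
    exact ih.sup (integrable_birkhoffSum hT hf (n + 1))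

lemma integral_max_neg_birkhoffMax_nonneg (hT : MeasurePreserving T μ μ) (hf : Integrable f μ)
    (n : ℕ) : 0 ≤ ∫ x, max (f x) (-birkhoffMax T f n (T x)) ∂μ := by
  have hM := integrable_birkhoffMax hT hf
  have invariant : ∫ x, birkhoffMax T f n (T x) ∂μ = ∫ x, birkhoffMax T f n x ∂μ := by
    rw [← integral_map hT.aemeasurable (by rw [hT.map_eq]; exact (hM n).1), hT.map_eq]
  simp only [← birkhoffMax_succ_sub_birkhoffMax_apply]
  calc 0
    _ ≤ ∫ x, birkhoffMax T f (n + 1) x ∂μ - ∫ x, birkhoffMax T f n (T x) ∂μ := by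
      rw [invariant, sub_nonneg]
      exact integral_mono (hM n) (hM (n + 1)) ((birkhoffMax T f).monotone n.le_succ)
    _ = ∫ x, (birkhoffMax T f (n + 1) x - birkhoffMax T f n (T x)) ∂μ :=
      (integral_sub (hM (n + 1)) (hT.integrable_comp_of_integrable (hM n))).symm

lemma integral_nonneg_of_ae_not_bddAbove_birkhoffSum (hT : MeasurePreserving T μ μ)
    (hf : Integrable f μ) (h : ∀ᵐ x ∂μ, ¬BddAbove (range fun n => birkhoffSum T f n x)) :
    0 ≤ ∫ x, f x ∂μ := by
  have hM n := hT.integrable_comp_of_integrable (integrable_birkhoffMax hT hf n)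
  suffices Tendsto (fun n => ∫ x, max (f x) (-birkhoffMax T f n (T x)) ∂μ) atTop
      (𝓝 (∫ x, f x ∂μ)) from
    ge_of_tendsto' this (integral_max_neg_birkhoffMax_nonneg hT hf)
  refine tendsto_integral_of_dominated_convergence (fun x => |f x|)
    (fun n => (hf.sup (hM n).neg).1) hf.abs (fun n => ae_of_all _ fun x => ?_) ?_
  · have := birkhoffMax_nonneg T f n (T x)
    exact abs_le.2 ⟨le_max_of_le_left (neg_abs_le _),
      max_le (le_abs_self _) (by linarith [abs_nonneg (f x)])⟩
  · filter_upwards [h] with x hx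
    have hTx := tendsto_birkhoffMax_atTop (mt (bddAbove_birkhoffSum_apply_iff T f x).1 hx)
    refine tendsto_const_nhds.congr' ?_
    filter_upwards [hTx.eventually_ge_atTop (-f x)] with n hn
    exact (max_eq_left (by linarith)).symm

lemma nullMeasurableSet_bddAbove_range {ι : Sort*} [Countable ι] {g : ι → α → ℝ}
    (hg : ∀ i, AEMeasurable (g i) μ) :
    NullMeasurableSet {x | BddAbove (range fun i => g i x)} μ := by
  refine (measurableSet_bddAbove_range fun i => (hg i).measurable_mk).nullMeasurableSet.congr
    (Filter.Eventually.set_eq ?_)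
  filter_upwards [ae_all_iff.2 fun i => (hg i).ae_eq_mk] with x hx
  simp only [hx]

lemma ae_bddAbove_birkhoffSum_of_integral_neg (hT : Ergodic T μ) (hf : Integrable f μ)
    (hneg : ∫ x, f x ∂μ < 0) : ∀ᵐ x ∂μ, BddAbove (range fun n => birkhoffSum T f n x) := by
  have measurable : NullMeasurableSet {x | BddAbove (range fun n => birkhoffSum T f n x)} μ :=
    nullMeasurableSet_bddAbove_range fun n =>
      (integrable_birkhoffSum hT.toMeasurePreserving hf n).aemeasurable
  have invariant : T ⁻¹' {x | BddAbove (range fun n => birkhoffSum T f n x)} =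
      {x | BddAbove (range fun n => birkhoffSum T f n x)} :=
    ext (bddAbove_birkhoffSum_apply_iff T f)
  refine (hT.quasiErgodic.ae_mem_or_ae_notMem₀ measurable
    (.of_eq invariant)).resolve_right fun h => hneg.not_ge ?_
  exact integral_nonneg_of_ae_not_bddAbove_birkhoffSum hT.toMeasurePreserving hf h

lemma ae_eventually_birkhoffAverage_lt [IsFiniteMeasure μ] (hT : Ergodic T μ) (hf : Integrable f μ)
    {a : ℝ} (ha : ⨍ x, f x ∂μ < a) : ∀ᵐ x ∂μ, ∀ᶠ n in atTop, birkhoffAverage ℝ T f n x < a := by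
  rcases eq_zero_or_neZero μ with rfl | _
  · simp
  obtain ⟨b, hb, hba⟩ := exists_between ha
  have hneg : ∫ x, (f x - b) ∂μ < 0 := by
    rw [average_eq, smul_eq_mul, inv_mul_lt_iff₀ measureReal_univ_pos] at hb
    rw [integral_sub hf (integrable_const b)]
    simpa
  filter_upwards [ae_bddAbove_birkhoffSum_of_integral_neg hT (hf.sub (integrable_const b)) hneg]
    with x hx using eventually_birkhoffAverage_lt_of_bddAbove hba hx

theorem ae_tendsto_birkhoffAverage_of_ergodic [IsFiniteMeasure μ] (hT : Ergodic T μ)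
    (hf : Integrable f μ) :
    ∀ᵐ x ∂μ, Tendsto (birkhoffAverage ℝ T f · x) atTop (𝓝 (⨍ x, f x ∂μ)) := by
  have upper : ∀ᵐ x ∂μ, ∀ q : ℚ, ⨍ x, f x ∂μ < q →
      ∀ᶠ n in atTop, birkhoffAverage ℝ T f n x < q := by
    simp only [ae_all_iff]
    exact fun q hq => ae_eventually_birkhoffAverage_lt hT hf hq
  have lower : ∀ᵐ x ∂μ, ∀ q : ℚ, q < ⨍ x, f x ∂μ →
      ∀ᶠ n in atTop, q < birkhoffAverage ℝ T f n x := by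
    simp only [ae_all_iff]
    intro q hq
    have := ae_eventually_birkhoffAverage_lt hT hf.neg (a := -q) (by simpa [average_neg] using hq)
    simpa [birkhoffAverage_neg] using this
  filter_upwards [upper, lower] with x hupper hlower
  refine tendsto_order.2 ⟨fun a ha => ?_, fun a ha => ?_⟩
  · obtain ⟨q, haq, hq⟩ := exists_rat_btwn ha
    exact (hlower q hq).mono fun n => haq.trans
  · obtain ⟨q, hq, hqa⟩ := exists_rat_btwn ha
    exact (hupper q hq).mono fun n hn => hn.trans hqa

end BirkhoffErgodicTheorem

lemma quasiMeasurePreserving_addCircle_mk (p : ℝ) [hp : Fact (0 < p)] :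
    Measure.QuasiMeasurePreserving ((↑) : ℝ → AddCircle p) := by
  refine ⟨AddCircle.measurable_mk', Measure.AbsolutelyContinuous.mk fun s hs h0 => ?_⟩
  rw [Measure.map_apply AddCircle.measurable_mk' hs, ← inter_univ (_ ⁻¹' s),
    ← iUnion_Ioc_zsmul hp.out, inter_iUnion]
  refine measure_iUnion_null fun n => ?_
  rw [add_zsmul, one_zsmul, ← Measure.restrict_apply (AddCircle.measurable_mk' hs),
    (AddCircle.measurePreserving_mk p (n • p)).measure_preimage hs.nullMeasurableSet, h0]

lemma ae_tendsto_average_pow_mul {p : ℝ} [Fact (0 < p)] {L : ℕ} (hL : 1 < L) {f : AddCircle p → ℝ}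
    (hf : Integrable f) :
    ∀ᵐ k : ℝ, Tendsto
      (fun n : ℕ => (1 / n : ℝ) * ∑ m ∈ Finset.range n, f ((L : ℝ) ^ m * k : ℝ)) atTop
      (𝓝 (⨍ x, f x)) := by
  filter_upwards [(quasiMeasurePreserving_addCircle_mk p).ae
    (ae_tendsto_birkhoffAverage_of_ergodic (AddCircle.ergodic_nsmul hL) hf)] with k hk
  convert hk using 2 with n
  simp [birkhoffAverage, birkhoffSum, smul_iterate_apply, ← AddCircle.coe_nsmul]

lemma e_eq_toCircle (k : ℝ) : e k = AddCircle.toCircle (k : UnitAddCircle) := by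
  rw [AddCircle.toCircle_apply_mk, Circle.coe_exp, e]
  push_cast
  ring_nf

lemma e_eq_circleMap (k : ℝ) : e k = circleMap 0 1 (2 * Real.pi * k) := by
  simp [e, circleMap, mul_right_comm]

lemma logMahler_eq_logMahlerMeasure (f : ℂ[X]) : logMahler f = f.logMahlerMeasure := by
  simp_rw [logMahler, logMahlerMeasure_def, Real.circleAverage_def, e_eq_circleMap]
  rw [intervalIntegral.integral_comp_mul_left
    (fun x => Real.log ‖f.eval (circleMap 0 1 x)‖) Real.two_pi_pos.ne']
  simp

lemma intervalIntegrable_log_norm_eval_e (f : ℂ[X]) :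
    IntervalIntegrable (fun k => Real.log ‖f.eval (e k)‖) volume 0 1 := by
  simp_rw [e_eq_circleMap]
  simpa [Real.pi_ne_zero] using
    (intervalIntegrable_mahlerMeasure f).comp_mul_left (c := 2 * Real.pi)

/-- The function `log |f|` on the unit circle, the latter being parametrized by `ℝ / ℤ`. -/
def circleLogNorm (f : ℂ[X]) (x : UnitAddCircle) : ℝ :=
  Real.log ‖f.eval (AddCircle.toCircle x : ℂ)‖

lemma circleLogNorm_coe (f : ℂ[X]) (k : ℝ) : circleLogNorm f k = Real.log ‖f.eval (e k)‖ := by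
  rw [circleLogNorm, e_eq_toCircle]

lemma measurable_circleLogNorm (f : ℂ[X]) : Measurable (circleLogNorm f) := by
  have : Continuous fun x : UnitAddCircle => f.eval (AddCircle.toCircle x : ℂ) := by fun_prop
  exact Real.measurable_log.comp this.norm.measurable

lemma integrable_circleLogNorm (f : ℂ[X]) : Integrable (circleLogNorm f) := by
  rw [← (UnitAddCircle.measurePreserving_mk 0).integrable_comp
    (measurable_circleLogNorm f).aestronglyMeasurable, zero_add]
  simp only [Function.comp_def, circleLogNorm_coe]
  exact (intervalIntegrable_log_norm_eval_e f).1

lemma average_circleLogNorm (f : ℂ[X]) : ⨍ x, circleLogNorm f x = logMahler f := by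
  have : ⨍ x, circleLogNorm f x = ∫ x, circleLogNorm f x := by simp [average_eq, measureReal_def]
  rw [this, ← UnitAddCircle.intervalIntegral_preimage 0, zero_add, logMahler]
  simp only [circleLogNorm_coe]

lemma mahlerMeasure_geom_sum {n : ℕ} (hn : n ≠ 0) :
    (∑ i ∈ Finset.range n, X ^ i : ℂ[X]).mahlerMeasure = 1 := by
  have (d : ℕ) : (cyclotomic d ℂ).mahlerMeasure = 1 := by
    simpa using cyclotomic_mahlerMeasure_eq_one (R := ℂ) d
  rw [← prod_cyclotomic_eq_geom_sum hn.bot_lt, Finset.prod,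
    prod_mahlerMeasure_eq_mahlerMeasure_prod, Multiset.map_map]
  simp [this]

lemma logMahler_mul_geom_sum (f : ℂ[X]) {n : ℕ} (hn : n ≠ 0) :
    logMahler (f * ∑ i ∈ Finset.range n, X ^ i) = logMahler f := by
  simp only [logMahler_eq_logMahlerMeasure, logMahlerMeasure_eq_log_MahlerMeasure,
    mahlerMeasure_mul, mahlerMeasure_geom_sum hn, mul_one]

lemma posPoly_Ca_add_Cb_add_Pa_add_Pb {L : ℕ} (wa wb : Fin L → Fin 2) :
    posPoly (Ca wa wb) + posPoly (Cb wa wb) + posPoly (Pa wa wb) + posPoly (Pb wa wb) =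
      ∑ i ∈ Finset.range L, X ^ i := by
  simp only [← Fin.sum_univ_eq_sum_range, posPoly, Ca, Cb, Pa, Pb, Finset.sum_filter,
    ← Finset.sum_add_distrib]
  refine Finset.sum_congr rfl fun i _ => ?_
  generalize wa i = s, wb i = t
  fin_cases s <;> fin_cases t <;> simp

lemma det_FourierB {L : ℕ} (wa wb : Fin L → Fin 2) (k : ℝ) :
    (FourierB wa wb k).det = ((posPoly (Pa wa wb) - posPoly (Pb wa wb)) *
      ∑ i ∈ Finset.range L, X ^ i).eval (e k) := by
  rw [← posPoly_Ca_add_Cb_add_Pa_add_Pb wa wb, FourierB, Matrix.det_fin_two_of]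
  simp only [eval_add, eval_mul, eval_sub]
  ring

/-- For a binary constant-length substitution of length `L ≥ 2` with `Q ≠ R`,
for Lebesgue-a.e. `k ∈ ℝ` the Birkhoff-type averages of `log |det B(L^m k)|` converge to the
logarithmic Mahler measure `m(Q - R)`. -/
theorem binary_substitution_det_Birkhoff_average
    (L : ℕ) (hL : 2 ≤ L) (wa wb : Fin L → Fin 2)
    (hQR : posPoly (Pa wa wb) ≠ posPoly (Pb wa wb)) :
    ∀ᵐ k : ℝ,
      Tendsto (fun n : ℕ => (1 / n : ℝ) *
          ∑ m ∈ Finset.range n, Real.log ‖(FourierB wa wb ((L : ℝ) ^ m * k)).det‖)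
        atTop (nhds (logMahler (posPoly (Pa wa wb) - posPoly (Pb wa wb)))) := by
  rw [← logMahler_mul_geom_sum _ (by omega : L ≠ 0), ← average_circleLogNorm]
  filter_upwards [ae_tendsto_average_pow_mul hL (integrable_circleLogNorm _)] with k hk
  simpa only [det_FourierB, circleLogNorm_coe] using hk
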